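/- Let N' be an odd positive integer, let a, σ: ℤ/N'ℤ → ℝ≥0 with ∑_n σ(n) = 1, and set a₁ = a ∗ σ (convolution on ℤ/N'ℤ). Let δ, ε > 0, let C > 0, and let K ≥ 1 be such that ∑_m |â(m)|^{5/2} ≤ K, ∑_m |â(m)|^{10/3} ≤ K, and ∑_m |â(m)|^{5/3} ≤ K. Suppose that |1 − σ̂(−2x)·σ̂(x)²| ≤ C·ε for every x ∈ ℤ/N'ℤ with |â(x)| ≥ δ. Then |∑_m â(−2m)(â(m))² − ∑_m â₁(−2m)(â₁(m))²| ≤ K·(C·ε + 2δ). -/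

import Mathlib

/-- The Fourier transform on `ℤ/Nℤ`: `f̂(b) = ∑_{n} f(n) e(−nb/N)` with `e(x) = e^{2πix}`. -/
noncomputable def dft {N : ℕ} [NeZero N] (f : ZMod N → ℂ) (b : ZMod N) : ℂ :=
    ∑ n : ZMod N, f n * Complex.exp (-(2 * Real.pi * Complex.I * (n.val : ℂ) * (b.val : ℂ) / N))

/-!
Since `â₁ = â σ̂`, the difference of the two sums is `∑ₘ â(cm) â(m)² (1 - σ̂(cm) σ̂(m)²)` with
`c = -2`. Where `|â(m)| ≥ δ` the last factor is small, and Young's inequality with conjugate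
exponents `p = 5/2` and `q = 5/3` bounds `∑ₘ |â(cm)| |â(m)|²` by the `p`-th and `2q`-th moments of
`â`, because `m ↦ cm` permutes `ℤ/Nℤ`. Where `|â(m)| < δ` the last factor is at most `2`, one factor
`|â(m)|` is traded for `δ`, and `∑ₘ |â(cm)| |â(m)|` is bounded by the `p`-th and `q`-th moments.
-/

section Fourier

variable {N : ℕ} [NeZero N]

lemma dft_eq_sum_stdAddChar (f : ZMod N → ℂ) (b : ZMod N) :
    dft f b = ∑ n : ZMod N, f n * ZMod.stdAddChar (-(n * b)) := by
  refine Finset.sum_congr rfl fun n _ => ?_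
  have hlift : -(n * b) = ((-((n.val : ℤ) * (b.val : ℤ)) : ℤ) : ZMod N) := by
    push_cast
    rw [ZMod.natCast_zmod_val, ZMod.natCast_zmod_val]
  rw [hlift, ZMod.stdAddChar_coe]
  congr 2
  push_cast
  ring

lemma dft_convolution (f g : ZMod N → ℂ) (b : ZMod N) :
    dft (fun n => ∑ m : ZMod N, f m * g (n - m)) b = dft f b * dft g b := by
  simp only [dft_eq_sum_stdAddChar]
  calc ∑ n, (∑ m, f m * g (n - m)) * ZMod.stdAddChar (-(n * b))
      = ∑ m, ∑ n, f m * g (n - m) * ZMod.stdAddChar (-(n * b)) := by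
        simp only [Finset.sum_mul]
        exact Finset.sum_comm
    _ = ∑ m, ∑ k, f m * g k * ZMod.stdAddChar (-((k + m) * b)) := by
        refine Finset.sum_congr rfl fun m _ => ?_
        rw [← Equiv.sum_comp (Equiv.addRight m)]
        simp only [Equiv.coe_addRight, add_sub_cancel_right]
    _ = ∑ m, ∑ k, f m * ZMod.stdAddChar (-(m * b)) * (g k * ZMod.stdAddChar (-(k * b))) := by
        refine Finset.sum_congr rfl fun m _ => Finset.sum_congr rfl fun k _ => ?_
        rw [add_mul, neg_add, AddChar.map_add_eq_mul]
        ring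
    _ = (∑ m, f m * ZMod.stdAddChar (-(m * b))) * ∑ k, g k * ZMod.stdAddChar (-(k * b)) :=
        (Finset.sum_mul_sum ..).symm

lemma norm_dft_le (f : ZMod N → ℂ) (b : ZMod N) : ‖dft f b‖ ≤ ∑ n : ZMod N, ‖f n‖ := by
  rw [dft_eq_sum_stdAddChar]
  exact norm_sum_le_of_le _ fun n _ => by rw [norm_mul, AddChar.norm_apply, mul_one]

end Fourier

lemma isUnit_neg_two_of_odd {N : ℕ} (hN : Odd N) : IsUnit (-2 : ZMod N) := by
  have htwo : IsUnit ((2 : ℕ) : ZMod N) :=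
    (ZMod.isUnit_iff_coprime 2 N).2 (Nat.coprime_two_left.2 hN)
  exact_mod_cast htwo.neg

lemma sum_mul_le_of_holderConjugate {ι : Type*} {s : Finset ι} {f g : ι → ℝ} {p q K : ℝ}
    (hpq : p.HolderConjugate q) (hf : ∀ i ∈ s, 0 ≤ f i) (hg : ∀ i ∈ s, 0 ≤ g i)
    (hfK : ∑ i ∈ s, f i ^ p ≤ K) (hgK : ∑ i ∈ s, g i ^ q ≤ K) :
    ∑ i ∈ s, f i * g i ≤ K := by
  have hp := hpq.nonneg
  have hq := hpq.symm.nonneg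
  calc ∑ i ∈ s, f i * g i
      ≤ ∑ i ∈ s, (f i ^ p / p + g i ^ q / q) := Finset.sum_le_sum fun i hi =>
        Real.young_inequality_of_nonneg (hf i hi) (hg i hi) hpq
    _ = (∑ i ∈ s, f i ^ p) / p + (∑ i ∈ s, g i ^ q) / q := by
        rw [Finset.sum_add_distrib, Finset.sum_div, Finset.sum_div]
    _ ≤ K / p + K / q := by gcongr
    _ = K := by rw [div_eq_mul_inv, div_eq_mul_inv, ← mul_add, hpq.inv_add_inv_eq_one, mul_one]

section NormEstimates

lemma norm_one_sub_mul_sq_le_two {R : Type*} [SeminormedRing R] [NormOneClass R] {x y : R}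
    (hx : ‖x‖ ≤ 1) (hy : ‖y‖ ≤ 1) : ‖1 - x * y ^ 2‖ ≤ 2 := by
  have hy2 : ‖y ^ 2‖ ≤ 1 := (norm_pow_le y 2).trans (pow_le_one₀ (norm_nonneg y) hy)
  have hxy : ‖x * y ^ 2‖ ≤ 1 := (norm_mul_le _ _).trans (mul_le_one₀ hx (norm_nonneg _) hy2)
  calc ‖1 - x * y ^ 2‖ ≤ 1 + 1 := norm_sub_le_of_le norm_one.le hxy
    _ = 2 := one_add_one_eq_two

lemma norm_mul_sq_mul_le_of_large_or_small {R : Type*} [SeminormedRing R] {x y z : R} {δ η M : ℝ}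
    (hδ : 0 ≤ δ) (hη : 0 ≤ η) (hz : ‖z‖ ≤ M) (hyz : δ ≤ ‖y‖ → ‖z‖ ≤ η) :
    ‖x * y ^ 2 * z‖ ≤ η * (‖x‖ * ‖y‖ ^ 2) + M * δ * (‖x‖ * ‖y‖) := by
  have hM : 0 ≤ M := (norm_nonneg z).trans hz
  have hmul : ‖x * y ^ 2 * z‖ ≤ ‖x‖ * ‖y‖ ^ 2 * ‖z‖ :=
    norm_mul_le_of_le (norm_mul_le_of_le le_rfl (norm_pow_le' y two_pos)) le_rfl
  rcases le_total δ ‖y‖ with hlarge | hsmall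
  · calc ‖x * y ^ 2 * z‖ ≤ ‖x‖ * ‖y‖ ^ 2 * η := hmul.trans (by gcongr; exact hyz hlarge)
      _ = η * (‖x‖ * ‖y‖ ^ 2) := mul_comm _ _
      _ ≤ _ := le_add_of_nonneg_right (by positivity)
  · calc ‖x * y ^ 2 * z‖ ≤ ‖x‖ * (‖y‖ * ‖y‖) * ‖z‖ := by rwa [← sq]
      _ ≤ ‖x‖ * (δ * ‖y‖) * M := by gcongr
      _ = M * δ * (‖x‖ * ‖y‖) := by ring
      _ ≤ _ := le_add_of_nonneg_left (by positivity)

variable {ι R : Type*} [Fintype ι] {K : ℝ}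

lemma sum_norm_comp_perm_mul_le [SeminormedAddGroup R] (e : Equiv.Perm ι) {A : ι → R} {g : ι → ℝ}
    {p q : ℝ} (hpq : p.HolderConjugate q) (hg : ∀ i, 0 ≤ g i) (hA : ∑ i, ‖A i‖ ^ p ≤ K)
    (hgK : ∑ i, g i ^ q ≤ K) : ∑ i, ‖A (e i)‖ * g i ≤ K :=
  sum_mul_le_of_holderConjugate hpq (fun _ _ => norm_nonneg _) (fun i _ => hg i)
    ((Equiv.sum_comp e fun i => ‖A i‖ ^ p).trans_le hA) hgK

lemma norm_sum_sub_sum_smoothed_le [SeminormedCommRing R] [NormOneClass R] (e : Equiv.Perm ι)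
    {A S : ι → R} {δ η p q : ℝ} (hδ : 0 ≤ δ) (hη : 0 ≤ η) (hS : ∀ i, ‖S i‖ ≤ 1)
    (hpq : p.HolderConjugate q)
    (hp : ∑ i, ‖A i‖ ^ p ≤ K) (hq : ∑ i, ‖A i‖ ^ q ≤ K) (h2q : ∑ i, ‖A i‖ ^ (2 * q) ≤ K)
    (hAS : ∀ i, δ ≤ ‖A i‖ → ‖1 - S (e i) * S i ^ 2‖ ≤ η) :
    ‖∑ i, A (e i) * A i ^ 2 - ∑ i, A (e i) * S (e i) * (A i * S i) ^ 2‖ ≤ K * (η + 2 * δ) := by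
  have hcubic : ∑ i, ‖A (e i)‖ * ‖A i‖ ^ 2 ≤ K := by
    refine sum_norm_comp_perm_mul_le e hpq (fun _ => sq_nonneg _) hp ?_
    simpa only [← Real.rpow_natCast_mul (norm_nonneg _), Nat.cast_ofNat] using h2q
  have hquadratic : ∑ i, ‖A (e i)‖ * ‖A i‖ ≤ K :=
    sum_norm_comp_perm_mul_le e hpq (fun _ => norm_nonneg _) hp hq
  calc ‖∑ i, A (e i) * A i ^ 2 - ∑ i, A (e i) * S (e i) * (A i * S i) ^ 2‖
      = ‖∑ i, A (e i) * A i ^ 2 * (1 - S (e i) * S i ^ 2)‖ := by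
        rw [← Finset.sum_sub_distrib]
        congr! 2
        ring
    _ ≤ ∑ i, (η * (‖A (e i)‖ * ‖A i‖ ^ 2) + 2 * δ * (‖A (e i)‖ * ‖A i‖)) :=
        norm_sum_le_of_le _ fun i _ => norm_mul_sq_mul_le_of_large_or_small hδ hη
          (norm_one_sub_mul_sq_le_two (hS (e i)) (hS i)) (hAS i)
    _ = η * ∑ i, ‖A (e i)‖ * ‖A i‖ ^ 2 + 2 * δ * ∑ i, ‖A (e i)‖ * ‖A i‖ := by
        rw [Finset.sum_add_distrib, ← Finset.mul_sum, ← Finset.mul_sum]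
    _ ≤ η * K + 2 * δ * K := by gcongr
    _ = K * (η + 2 * δ) := by ring

end NormEstimates

theorem smoothing_ap_count_close_general {N : ℕ} [NeZero N] {c : ZMod N} (hc : IsUnit c)
    {a σ a₁ : ZMod N → ℂ} (hσ : ∑ n : ZMod N, ‖σ n‖ ≤ 1)
    (ha₁ : a₁ = fun n => ∑ m : ZMod N, a m * σ (n - m))
    {δ η K p q : ℝ} (hδ : 0 ≤ δ) (hη : 0 ≤ η) (hpq : p.HolderConjugate q)
    (hp : ∑ m : ZMod N, ‖dft a m‖ ^ p ≤ K) (hq : ∑ m : ZMod N, ‖dft a m‖ ^ q ≤ K)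
    (h2q : ∑ m : ZMod N, ‖dft a m‖ ^ (2 * q) ≤ K)
    (hsig : ∀ x : ZMod N, δ ≤ ‖dft a x‖ → ‖1 - dft σ (c * x) * dft σ x ^ 2‖ ≤ η) :
    ‖∑ m : ZMod N, dft a (c * m) * dft a m ^ 2 - ∑ m : ZMod N, dft a₁ (c * m) * dft a₁ m ^ 2‖ ≤
      K * (η + 2 * δ) := by
  simp only [ha₁, dft_convolution]
  exact norm_sum_sub_sum_smoothed_le hc.unit.mulLeft hδ hη
    (fun b => (norm_dft_le σ b).trans hσ) hpq hp hq h2q hsig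

/-- **The smoothed function counts progressions like the original (bound on `Δ`).**
With `a₁ = a ∗ σ`, `∑σ = 1`, moment bounds `∑|â|^{5/2}, ∑|â|^{10/3}, ∑|â|^{5/3} ≤ K`,
and `|1 − σ̂(−2x)σ̂(x)²| ≤ Cε` whenever `|â(x)| ≥ δ`, one has
`|∑_m â(−2m)â(m)² − ∑_m â₁(−2m)â₁(m)²| ≤ K(Cε + 2δ)`. -/
theorem smoothing_ap_count_close (N' : ℕ) [NeZero N'] (hodd : Odd N')
    (a σ : ZMod N' → ℝ) (ha : ∀ n, 0 ≤ a n) (hσ : ∀ n, 0 ≤ σ n)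
    (hσ1 : ∑ n : ZMod N', σ n = 1)
    (a₁ : ZMod N' → ℝ) (ha₁ : a₁ = fun n => ∑ m : ZMod N', a m * σ (n - m))
    (δ ε C K : ℝ) (hδ : 0 < δ) (hε : 0 < ε) (hC : 0 < C) (hK : 1 ≤ K)
    (h52 : ∑ m : ZMod N', ‖dft (fun n => (a n : ℂ)) m‖ ^ ((5 : ℝ) / 2) ≤ K)
    (h103 : ∑ m : ZMod N', ‖dft (fun n => (a n : ℂ)) m‖ ^ ((10 : ℝ) / 3) ≤ K)
    (h53 : ∑ m : ZMod N', ‖dft (fun n => (a n : ℂ)) m‖ ^ ((5 : ℝ) / 3) ≤ K)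
    (hsig : ∀ x : ZMod N', δ ≤ ‖dft (fun n => (a n : ℂ)) x‖ →
      ‖1 - dft (fun n => (σ n : ℂ)) (-(2 * x)) * (dft (fun n => (σ n : ℂ)) x) ^ 2‖ ≤ C * ε) :
    ‖(∑ m : ZMod N', dft (fun n => (a n : ℂ)) (-(2 * m)) * (dft (fun n => (a n : ℂ)) m) ^ 2) -
        ∑ m : ZMod N', dft (fun n => (a₁ n : ℂ)) (-(2 * m)) *
          (dft (fun n => (a₁ n : ℂ)) m) ^ 2‖ ≤
      K * (C * ε + 2 * δ) := by
  simp only [← neg_mul] at hsig ⊢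
  exact smoothing_ap_count_close_general (isUnit_neg_two_of_odd hodd)
    (by simp [abs_of_nonneg, hσ, hσ1]) (by simp [ha₁]) hδ.le (mul_pos hC hε).le
    (Real.holderConjugate_iff.2 (by norm_num)) h52 h53 (by norm_num [h103]) hsig
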